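/- arXiv:2402.07194 — 2 statements merged into one kernel-verified Lean document; each statement's English description precedes it below -/
import Mathlib

section
/- For integers s, t ≥ 5 with max{s,t} ≥ 6, the strong metric dimension of the modular product of the complements of the cycles C_s and C_t satisfies dim_s(C̄_s ⋄ C̄_t) = st − ⌊s/2⌋·⌊t/2⌋. -/
/-!
Write `C = C_s`, `D = C_t` and `X = C̄_s ⋄ C̄_t`. Unfolding the definitions, two distinct vertices
of `X` are adjacent iff their first coordinates are adjacent in `C` exactly when their second
coordinates are adjacent in `D` (`adj_modularProduct_compl`). For `s, t ≥ 5` two distinct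
nonadjacent vertices always have a common neighbour, so `X` has diameter at most two. Hence a pair
at distance two is strongly resolved only by its own members, and the complement of a strong
resolving set is a clique (`isClique_compl_of_resolving`). Conversely, if `I` and `J` are
independent in `C` and `D`, then `I × J` is a clique of `X` without true twins, so its complement is
strongly resolving (`resolving_compl_prod`). The dimension is therefore `st` minus the clique number
of `X`, once the latter is shown to be `⌊s/2⌋⌊t/2⌋`; this value is attained by `I × J`.

For the upper bound on a clique `K`, assume by symmetry `t ≥ 6` (`clique_card_le`). The columns
`K_g = {h | (g, h) ∈ K}` are independent in `C_t`, and consecutive columns are completely joined in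
`C_t`. As `C_t` has no 4-cycle and maximum degree two, two consecutive nonempty columns have at
most three elements together, so in all cases consecutive columns have at most `⌊t/2⌋` elements
together. Pairing columns finishes the proof if `s` is even or some column is empty. If `s` is odd
and no column is empty, pairing gives only `|K| ≤ 1 + 3(s-1)/2`. Equality would force columns of
sizes one and two to alternate except at one place; a column of size two forces its two
neighbours to coincide, so all singleton columns are equal, which contradicts the fact that the two
consecutive singletons are adjacent in `C_t` (`sum_le_of_odd`).
-/

open SimpleGraph

/-- The closed neighborhood `N[v]` of a vertex. -/
def closedNbr {α : Type*} (G : SimpleGraph α) (v : α) : Set α :=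
  insert v (G.neighborSet v)

/-- The modular product `G ⋄ H`. -/
def modularProduct {α β : Type*} (G : SimpleGraph α) (H : SimpleGraph β) :
    SimpleGraph (α × β) :=
  SimpleGraph.fromRel (fun x y =>
    (x.1 = y.1 ∧ H.Adj x.2 y.2) ∨
    (G.Adj x.1 y.1 ∧ x.2 = y.2) ∨
    (G.Adj x.1 y.1 ∧ H.Adj x.2 y.2) ∨
    (x.1 ≠ y.1 ∧ x.2 ≠ y.2 ∧ ¬ G.Adj x.1 y.1 ∧ ¬ H.Adj x.2 y.2))

/-- `{g, g'}` is a `γ_G`-pair: the closed neighborhoods are disjoint and cover `V(G)`. -/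
def gammaPair {α : Type*} (G : SimpleGraph α) (g g' : α) : Prop :=
  closedNbr G g ∩ closedNbr G g' = ∅ ∧ closedNbr G g ∪ closedNbr G g' = Set.univ

/-- A universal vertex. -/
def IsUniversal {α : Type*} (G : SimpleGraph α) (v : α) : Prop :=
  closedNbr G v = Set.univ

/-- A complete graph: every two distinct vertices are adjacent. -/
def IsCompleteGraph {α : Type*} (G : SimpleGraph α) : Prop :=
  ∀ u v : α, u ≠ v → G.Adj u v

/-- `G` is a disjoint union of two cliques. -/
def TwoCliques {α : Type*} (G : SimpleGraph α) : Prop :=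
  ∃ A B : Set α, A.Nonempty ∧ B.Nonempty ∧ A ∪ B = Set.univ ∧ A ∩ B = ∅ ∧
    (∀ u ∈ A, ∀ v ∈ A, u ≠ v → G.Adj u v) ∧
    (∀ u ∈ B, ∀ v ∈ B, u ≠ v → G.Adj u v) ∧
    (∀ u ∈ A, ∀ v ∈ B, ¬ G.Adj u v)

/-- `u` and `v` are mutually maximally distant in `X`. -/
def MMD {α : Type*} (X : SimpleGraph α) (u v : α) : Prop :=
  (∀ w, X.Adj u w → X.edist w v ≤ X.edist u v) ∧
  (∀ w, X.Adj v w → X.edist w u ≤ X.edist u v)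

/-- A strong resolving set of `X`. -/
def IsStrongResolvingSet {α : Type*} (X : SimpleGraph α) (S : Set α) : Prop :=
  ∀ u v : α, u ≠ v → ∃ w ∈ S,
    X.dist u w = X.dist u v + X.dist v w ∨ X.dist v w = X.dist v u + X.dist u w

/-- The strong metric dimension of `X`. -/
noncomputable def sdim {α : Type*} (X : SimpleGraph α) : ℕ :=
  sInf {n | ∃ S : Set α, S.ncard = n ∧ IsStrongResolvingSet X S}

/-- The star `K_{1,n}`: the center is `none`, the leaves are `some i`. -/
def starGraph (n : ℕ) : SimpleGraph (Option (Fin n)) :=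
  SimpleGraph.fromRel (fun u v => u = none ∧ v ≠ none)

/-- The vertex cover number `β(X)`. -/
noncomputable def vertexCoverNumber {γ : Type*} (X : SimpleGraph γ) : ℕ :=
  sInf {n | ∃ C : Set γ, C.ncard = n ∧ ∀ u v, X.Adj u v → u ∈ C ∨ v ∈ C}

/-! ### Cycle graphs -/

lemma cycle_adj_val {n : ℕ} (hn : 5 ≤ n) (x y : Fin n) :
    (cycleGraph n).Adj x y ↔ y.val = x.val + 1 ∨ x.val = y.val + 1 ∨
      (x.val = 0 ∧ y.val + 1 = n) ∨ (y.val = 0 ∧ x.val + 1 = n) := by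
  rw [cycleGraph_adj']
  have hx := x.isLt
  have hy := y.isLt
  have key : ∀ a b : Fin n, (a - b).val = 1 ↔ a.val = b.val + 1 ∨ (a.val = 0 ∧ b.val + 1 = n) := by
    intro a b
    have ha := a.isLt
    have hb := b.isLt
    rw [Fin.sub_def]
    simp only
    rcases le_or_gt b.val a.val with h | h
    · rw [show n - b.val + a.val = (a.val - b.val) + n by omega, Nat.add_mod_right,
        Nat.mod_eq_of_lt (by omega)]
      omega
    · rw [Nat.mod_eq_of_lt (by omega)]
      omega
  rw [key, key]
  omega

lemma cycle_exists_far {n : ℕ} (hn : 5 ≤ n) {x y : Fin n} (h : (cycleGraph n).Adj x y) :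
    ∃ z, ¬ (cycleGraph n).Adj x z ∧ ¬ (cycleGraph n).Adj y z ∧ x ≠ z ∧ y ≠ z := by
  have hx := x.isLt
  have hy := y.isLt
  rw [cycle_adj_val hn] at h
  -- the vertex two steps beyond one end of the edge
  have : ∃ k, k < n ∧
      ((y.val = x.val + 1 ∨ y.val = 0 ∧ x.val + 1 = n) → (k = y.val + 2 ∨ k + n = y.val + 2)) ∧
      ((x.val = y.val + 1 ∨ x.val = 0 ∧ y.val + 1 = n) → (k = x.val + 2 ∨ k + n = x.val + 2)) := by
    by_cases h1 : y.val = x.val + 1 ∨ y.val = 0 ∧ x.val + 1 = n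
    · by_cases h2 : y.val + 2 < n
      · exact ⟨y.val + 2, by omega⟩
      · exact ⟨y.val + 2 - n, by omega⟩
    · by_cases h2 : x.val + 2 < n
      · exact ⟨x.val + 2, by omega⟩
      · exact ⟨x.val + 2 - n, by omega⟩
  obtain ⟨k, hk, h1, h2⟩ := this
  refine ⟨⟨k, hk⟩, ?_⟩
  simp only [cycle_adj_val hn, ne_eq, Fin.ext_iff]
  omega

lemma cycle_exists_nbr_far {n : ℕ} (hn : 5 ≤ n) {x y : Fin n} (hne : x ≠ y)
    (h : ¬ (cycleGraph n).Adj x y) :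
    ∃ z, (cycleGraph n).Adj x z ∧ ¬ (cycleGraph n).Adj y z ∧ y ≠ z := by
  have hx := x.isLt
  have hy := y.isLt
  rw [cycle_adj_val hn] at h
  rw [ne_eq, Fin.ext_iff] at hne
  obtain ⟨p, hp, hp'⟩ : ∃ p, p < n ∧ (p = x.val + 1 ∨ (p = 0 ∧ x.val + 1 = n)) := by
    by_cases h2 : x.val + 1 < n
    · exact ⟨x.val + 1, by omega⟩
    · exact ⟨0, by omega⟩
  obtain ⟨q, hq, hq'⟩ : ∃ q, q < n ∧ (x.val = q + 1 ∨ (x.val = 0 ∧ q + 1 = n)) := by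
    by_cases h2 : x.val = 0
    · exact ⟨n - 1, by omega⟩
    · exact ⟨x.val - 1, by omega⟩
  -- both neighbours of `x` can be adjacent to `y` only in a cycle of length four
  by_cases hc : (cycleGraph n).Adj y ⟨p, hp⟩
  · refine ⟨⟨q, hq⟩, ?_⟩
    simp only [cycle_adj_val hn, ne_eq, Fin.ext_iff] at hc ⊢
    omega
  · refine ⟨⟨p, hp⟩, ?_⟩
    simp only [cycle_adj_val hn, ne_eq, Fin.ext_iff] at hc ⊢
    omega

/-- Cycles of length at least five contain no 4-cycle. -/
lemma cycle_no_C4 {n : ℕ} (hn : 5 ≤ n) {a a' b b' : Fin n} (hne : a ≠ a')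
    (h1 : (cycleGraph n).Adj a b) (h2 : (cycleGraph n).Adj a' b)
    (h3 : (cycleGraph n).Adj a b') (h4 : (cycleGraph n).Adj a' b') : b = b' := by
  simp only [cycle_adj_val hn, ne_eq, Fin.ext_iff] at *
  omega

lemma cycle_degree_le {n : ℕ} (hn : 5 ≤ n) {b x y z : Fin n}
    (hx : (cycleGraph n).Adj x b) (hy : (cycleGraph n).Adj y b) (hz : (cycleGraph n).Adj z b) :
    x = y ∨ x = z ∨ y = z := by
  simp only [cycle_adj_val hn, Fin.ext_iff] at *
  omega

lemma cycle_join_card_le {n : ℕ} (hn : 5 ≤ n) {A B : Finset (Fin n)} (hA : A.Nonempty)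
    (hB : B.Nonempty) (h : ∀ a ∈ A, ∀ b ∈ B, (cycleGraph n).Adj a b) : A.card + B.card ≤ 3 := by
  have two : ∀ {A B : Finset (Fin n)}, B.Nonempty →
      (∀ a ∈ A, ∀ b ∈ B, (cycleGraph n).Adj a b) → A.card ≤ 2 := by
    intro A B ⟨b, hb⟩ h
    by_contra! hc
    obtain ⟨x, y, z, hx, hy, hz, hxy, hxz, hyz⟩ := Finset.two_lt_card_iff.1 hc
    rcases cycle_degree_le hn (h x hx b hb) (h y hy b hb) (h z hz b hb) with e | e | e <;>
      contradiction
  have hA2 := two hB h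
  have hB2 := two hA (fun b hb a ha => (h a ha b hb).symm)
  by_contra! hc
  obtain ⟨a, ha, a', ha', hne⟩ := Finset.one_lt_card.1 (show 1 < A.card by omega)
  obtain ⟨b, hb, b', hb', hne'⟩ := Finset.one_lt_card.1 (show 1 < B.card by omega)
  exact hne' (cycle_no_C4 hn hne (h a ha b hb) (h a' ha' b hb) (h a ha b' hb') (h a' ha' b' hb'))

lemma cycle_adj_add_one {n : ℕ} [NeZero n] (hn : 5 ≤ n) (x : Fin n) :
    (cycleGraph n).Adj x (x + 1) := by
  rw [cycleGraph_adj']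
  right
  rw [add_sub_cancel_left, Fin.val_one', Nat.mod_eq_of_lt (by omega)]

/-! ### Sums around a cycle -/

lemma sum_cycle_shift {s : ℕ} [NeZero s] (f : Fin s → ℕ) (g : Fin s) :
    ∑ x, f x = ∑ i ∈ Finset.range s, f (g + (Fin.ofNat s i)) := by
  rw [← Equiv.sum_comp (Equiv.addLeft g) f, ← Fin.sum_univ_eq_sum_range]
  refine Finset.sum_congr rfl fun i _ => ?_
  simp only [Equiv.coe_addLeft]
  congr 2
  ext
  simp [Fin.ofNat, Nat.mod_eq_of_lt i.isLt]

lemma shift_succ {s : ℕ} [NeZero s] (g : Fin s) (i : ℕ) :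
    g + Fin.ofNat s (i + 1) = g + Fin.ofNat s i + 1 := by
  rw [add_assoc]
  congr 1
  ext
  simp [Fin.ofNat, Fin.val_add]

lemma sum_range_pairs_le (b : ℕ → ℕ) (c : ℕ) (h : ∀ i, b i + b (i + 1) ≤ c) (m : ℕ) :
    ∑ i ∈ Finset.range (2 * m), b i ≤ m * c := by
  induction m with
  | zero => simp
  | succ m ih =>
    rw [show 2 * (m + 1) = 2 * m + 1 + 1 by ring, Finset.sum_range_succ, Finset.sum_range_succ]
    have := h (2 * m)
    rw [add_mul]
    omega

lemma sum_cycle_le {s : ℕ} [NeZero s] (f : Fin s → ℕ) (c : ℕ) (h : ∀ x, f x + f (x + 1) ≤ c)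
    (h0 : Even s ∨ ∃ x, f x = 0) : ∑ x, f x ≤ s / 2 * c := by
  have step : ∀ (g : Fin s) (i : ℕ),
      f (g + Fin.ofNat s i) + f (g + Fin.ofNat s (i + 1)) ≤ c := by
    intro g i
    rw [shift_succ]
    exact h _
  rcases Nat.even_or_odd s with hs | hs
  · rw [sum_cycle_shift f 0]
    have := sum_range_pairs_le _ c (step 0) (s / 2)
    rwa [Nat.two_mul_div_two_of_even hs] at this
  · obtain ⟨g, hg⟩ := h0.resolve_left (Nat.not_even_iff_odd.2 hs)
    rw [sum_cycle_shift f g]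
    obtain ⟨m, hm⟩ := hs
    have := sum_range_pairs_le (fun i => f (g + Fin.ofNat s (i + 1))) c
      (fun i => step g (i + 1)) m
    rw [show Finset.range s = Finset.range (2 * m + 1) by rw [hm], Finset.sum_range_succ',
      show s / 2 = m by omega]
    simpa [Fin.ofNat, hg] using this

lemma cycle_indep_card_le {n : ℕ} (hn : 5 ≤ n) (A : Finset (Fin n))
    (h : ∀ a ∈ A, ∀ b ∈ A, ¬ (cycleGraph n).Adj a b) : A.card ≤ n / 2 := by
  have : NeZero n := ⟨by omega⟩
  let f : Fin n → ℕ := fun x => if x ∈ A then 1 else 0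
  have hf : ∀ x, f x + f (x + 1) ≤ 1 := by
    intro x
    have := cycle_adj_add_one hn x
    simp only [f]
    split_ifs with h1 h2 <;> simp
    exact h _ h1 _ h2 this
  have := sum_cycle_le f 1 hf (Or.inr (by
    by_contra! hc
    have h0 := hf 0
    have h1 := hc 0
    have h2 := hc (0 + 1)
    omega))
  simpa [f] using this

lemma cycle_exists_indep {n : ℕ} (hn : 5 ≤ n) : ∃ A : Finset (Fin n), A.card = n / 2 ∧
    ∀ a ∈ A, ∀ b ∈ A, ¬ (cycleGraph n).Adj a b := by
  refine ⟨Finset.univ.image (fun i : Fin (n / 2) => (⟨2 * i.val, by omega⟩ : Fin n)), ?_, ?_⟩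
  · rw [Finset.card_image_of_injective, Finset.card_univ, Fintype.card_fin]
    intro i j hij
    simp only [Fin.mk.injEq] at hij
    ext
    omega
  · intro a ha b hb
    simp only [Finset.mem_image, Finset.mem_univ, true_and] at ha hb
    obtain ⟨i, rfl⟩ := ha
    obtain ⟨j, rfl⟩ := hb
    rw [cycle_adj_val hn]
    simp only
    omega

/-- The extremal step on an odd cycle: `f` records column sizes, all one or two with no two
consecutive twos, and `a` picks an element of each column. A column of size two makes the chosen
elements on its two sides equal, which rules out the value `1 + 3 * (s / 2)` that pairing allows. -/
lemma sum_le_of_odd {s : ℕ} [NeZero s] {α : Type*} (hs : Odd s) (f : Fin s → ℕ) (a : Fin s → α)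
    (hpos : ∀ x, 1 ≤ f x) (h3 : ∀ x, f x + f (x + 1) ≤ 3)
    (h2 : ∀ x, 2 ≤ f (x + 1) → a x = a (x + 1 + 1)) (hne : ∀ x, a x ≠ a (x + 1)) :
    ∑ x, f x ≤ s / 2 * 3 := by
  -- two consecutive columns of size one exist, since otherwise twice the total is the odd `3 * s`
  obtain ⟨g, hg⟩ : ∃ g, f g + f (g + 1) ≤ 2 := by
    by_contra! hc
    have e : ∀ x, f x + f (x + 1) = 3 := fun x => le_antisymm (h3 x) (hc x)
    have e1 : ∑ x, (f x + f (x + 1)) = s * 3 := by simp [e]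
    have e2 : ∑ x, f (x + 1) = ∑ x, f x := Equiv.sum_comp (Equiv.addRight (1 : Fin s)) f
    rw [Finset.sum_add_distrib, e2] at e1
    obtain ⟨m, hm⟩ := hs
    omega
  obtain ⟨m, hm⟩ := hs
  let F : ℕ → Fin s := fun i => g + Fin.ofNat s i
  have F0 : F 0 = g := by simp [F, Fin.ofNat]
  have Fs : F s = g := by simp [F, Fin.ofNat]
  have Fsucc : ∀ i, F (i + 1) = F i + 1 := shift_succ g
  have key : ∀ k, ∑ i ∈ Finset.range (2 * k), f (F (i + 1)) < k * 3 ∨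
      (∑ i ∈ Finset.range (2 * k), f (F (i + 1)) = k * 3 ∧ a (F (2 * k + 1)) = a (F 1) ∧
        f (F (2 * k + 1)) = 1) := by
    intro k
    induction k with
    | zero =>
      right
      have := hpos g
      have := hpos (g + 1)
      refine ⟨by simp, by simp, ?_⟩
      rw [Fsucc, F0]
      omega
    | succ k ih =>
      rw [show 2 * (k + 1) = 2 * k + 1 + 1 by ring, Finset.sum_range_succ, Finset.sum_range_succ]
      have e1 := h3 (F (2 * k + 1))
      rw [← Fsucc] at e1
      rcases ih with ih | ⟨ih, iha, ihf⟩
      · left; omega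
      · have e2 := h3 (F (2 * k + 1 + 1))
        have e3 := h2 (F (2 * k + 1))
        have e4 := hpos (F (2 * k + 1 + 1 + 1))
        rw [← Fsucc] at e2
        rw [← Fsucc, ← Fsucc] at e3
        rcases Nat.lt_or_ge (f (F (2 * k + 1 + 1))) 2 with h | h
        · left; omega
        · right
          exact ⟨by omega, (e3 h).symm.trans iha, by omega⟩
  rw [sum_cycle_shift f g]
  change ∑ i ∈ Finset.range s, f (F i) ≤ _
  rw [show Finset.range s = Finset.range (2 * m + 1) by rw [hm], Finset.sum_range_succ',
    show s / 2 = m by omega]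
  have hf0 : f (F 0) = 1 := by
    have := hpos g
    have := hpos (g + 1)
    rw [F0]
    omega
  rcases key m with h | ⟨_, h, _⟩
  · omega
  · rw [← hm, Fs, show (1 : ℕ) = 0 + 1 from rfl, Fsucc, F0] at h
    exact absurd h (hne g)

/-! ### Adjacency, cliques and resolving sets in the modular product -/

lemma adj_modularProduct_compl {α β : Type*} (C : SimpleGraph α) (D : SimpleGraph β) (u v : α × β) :
    (modularProduct Cᶜ Dᶜ).Adj u v ↔ u ≠ v ∧ (C.Adj u.1 v.1 ↔ D.Adj u.2 v.2) := by
  obtain ⟨g, h⟩ := u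
  obtain ⟨g', h'⟩ := v
  simp only [modularProduct, SimpleGraph.fromRel_adj, SimpleGraph.compl_adj, ne_eq, Prod.mk.injEq,
    C.adj_comm g' g, D.adj_comm h' h, eq_comm (a := g') (b := g), eq_comm (a := h') (b := h)]
  have h1 : g = g' → ¬ C.Adj g g' := by rintro rfl; exact C.irrefl
  have h2 : h = h' → ¬ D.Adj h h' := by rintro rfl; exact D.irrefl
  by_cases e1 : g = g' <;> by_cases e2 : h = h' <;> by_cases a1 : C.Adj g g' <;>
    by_cases a2 : D.Adj h h' <;> simp_all

lemma clique_card_le {s t : ℕ} (hs : 5 ≤ s) (ht : 6 ≤ t) (K : Finset (Fin s × Fin t))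
    (hK : ∀ u ∈ K, ∀ v ∈ K, u ≠ v →
      ((cycleGraph s).Adj u.1 v.1 ↔ (cycleGraph t).Adj u.2 v.2)) :
    K.card ≤ s / 2 * (t / 2) := by
  have : NeZero s := ⟨by omega⟩
  let col : Fin s → Finset (Fin t) := fun g => Finset.univ.filter fun h => (g, h) ∈ K
  have mem_col : ∀ {g h}, h ∈ col g ↔ (g, h) ∈ K := by simp [col]
  have hcard : K.card = ∑ g, (col g).card := by
    rw [← Finset.card_sigma]
    refine Finset.card_bij' (fun u _ => ⟨u.1, u.2⟩) (fun x _ => (x.1, x.2)) ?_ ?_ ?_ ?_ <;>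
      simp [col]
  have hindep : ∀ g, (col g).card ≤ t / 2 := by
    intro g
    refine cycle_indep_card_le (by omega) _ fun a ha b hb hab => ?_
    have := (hK _ (mem_col.1 ha) _ (mem_col.1 hb) (by simpa using hab.ne)).2 hab
    exact (cycleGraph s).irrefl this
  have hjoin : ∀ g, ∀ a ∈ col g, ∀ b ∈ col (g + 1), (cycleGraph t).Adj a b := by
    intro g a ha b hb
    have hadj := cycle_adj_add_one hs g
    exact (hK _ (mem_col.1 ha) _ (mem_col.1 hb) (by simp [hadj.ne])).1 hadj
  have h3 : ∀ g, (col g).Nonempty → (col (g + 1)).Nonempty →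
      (col g).card + (col (g + 1)).card ≤ 3 := fun g h h' =>
    cycle_join_card_le (by omega) h h' (hjoin g)
  rw [hcard]
  by_cases h0 : Even s ∨ ∃ g, (col g).card = 0
  · refine sum_cycle_le _ _ (fun g => ?_) h0
    rcases (col g).eq_empty_or_nonempty with h | h
    · simpa [h] using hindep _
    rcases (col (g + 1)).eq_empty_or_nonempty with h' | h'
    · simpa [h'] using hindep _
    · have := h3 g h h'
      omega
  · push Not at h0
    obtain ⟨hodd, hpos⟩ := h0
    have hne : ∀ g, (col g).Nonempty := fun g => Finset.card_ne_zero.1 (hpos g)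
    choose a ha using hne
    calc ∑ g, (col g).card ≤ s / 2 * 3 := by
          refine sum_le_of_odd (Nat.not_even_iff_odd.1 hodd) _ a (fun g => Nat.one_le_iff_ne_zero.2 (hpos g))
            (fun g => h3 g ⟨_, ha _⟩ ⟨_, ha _⟩) (fun g hg => ?_)
            (fun g => (hjoin g _ (ha _) _ (ha _)).ne)
          obtain ⟨p, hp, q, hq, hpq⟩ := Finset.one_lt_card.1 hg
          exact cycle_no_C4 (by omega) hpq (hjoin g _ (ha _) _ hp).symm
            (hjoin g _ (ha _) _ hq).symm (hjoin (g + 1) _ hp _ (ha _)) (hjoin (g + 1) _ hq _ (ha _))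
      _ ≤ s / 2 * (t / 2) := Nat.mul_le_mul_left _ (by omega)

lemma dist_eq_two {s t : ℕ} (hs : 5 ≤ s) (ht : 5 ≤ t) {u v : Fin s × Fin t} (hne : u ≠ v)
    (h : ¬ (modularProduct (cycleGraph s)ᶜ (cycleGraph t)ᶜ).Adj u v) :
    (modularProduct (cycleGraph s)ᶜ (cycleGraph t)ᶜ).dist u v = 2 := by
  set X := modularProduct (cycleGraph s)ᶜ (cycleGraph t)ᶜ with hX
  obtain ⟨w, h1, h2⟩ : ∃ w, X.Adj u w ∧ X.Adj w v := by
    simp only [hX, adj_modularProduct_compl, hne, ne_eq, not_false_iff, true_and] at h ⊢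
    by_cases hd : (cycleGraph t).Adj u.2 v.2
    · have hc : ¬ (cycleGraph s).Adj u.1 v.1 := by tauto
      obtain ⟨z, hz1, hz2, hz3, hz4⟩ := cycle_exists_far ht hd
      refine ⟨(u.1, z), ⟨?_, ?_⟩, ?_, ?_⟩
      · exact fun e => hz3 (congrArg Prod.snd e)
      · simp [hz1]
      · exact fun e => hz4 (congrArg Prod.snd e).symm
      · simp [hc, (cycleGraph t).adj_comm z, hz2]
    · have hc : (cycleGraph s).Adj u.1 v.1 := by tauto
      obtain ⟨z, hz1, hz2, hz3, hz4⟩ := cycle_exists_far hs hc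
      refine ⟨(z, u.2), ⟨?_, ?_⟩, ?_, ?_⟩
      · exact fun e => hz3 (congrArg Prod.fst e)
      · simp [hz1]
      · exact fun e => hz4 (congrArg Prod.fst e).symm
      · simp [hd, (cycleGraph s).adj_comm z, hz2]
  have hle : X.dist u v ≤ 2 := SimpleGraph.dist_le (.cons h1 (.cons h2 .nil))
  have hr : X.Reachable u v := ⟨.cons h1 (.cons h2 .nil)⟩
  have h0 : X.dist u v ≠ 0 := fun e => hne (hr.dist_eq_zero_iff.1 e)
  have h1' : X.dist u v ≠ 1 := fun e => h (SimpleGraph.dist_eq_one_iff_adj.1 e)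
  omega

lemma dist_cases {s t : ℕ} (hs : 5 ≤ s) (ht : 5 ≤ t) (u v : Fin s × Fin t) :
    (modularProduct (cycleGraph s)ᶜ (cycleGraph t)ᶜ).dist u v ≤ 2 ∧
    ((modularProduct (cycleGraph s)ᶜ (cycleGraph t)ᶜ).dist u v = 0 → u = v) := by
  set X := modularProduct (cycleGraph s)ᶜ (cycleGraph t)ᶜ with hX
  by_cases hne : u = v
  · subst hne; simp
  by_cases h : X.Adj u v
  · have := SimpleGraph.dist_eq_one_iff_adj.2 h
    omega
  · have : X.dist u v = 2 := dist_eq_two hs ht hne h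
    omega

lemma isClique_compl_of_resolving {s t : ℕ} (hs : 5 ≤ s) (ht : 5 ≤ t) {S : Set (Fin s × Fin t)}
    (hS : IsStrongResolvingSet (modularProduct (cycleGraph s)ᶜ (cycleGraph t)ᶜ) S) :
    (modularProduct (cycleGraph s)ᶜ (cycleGraph t)ᶜ).IsClique Sᶜ := by
  intro u hu v hv hne
  by_contra h
  have h2 := dist_eq_two hs ht hne h
  obtain ⟨w, hw, e | e⟩ := hS u v hne
  · have h3 := dist_cases hs ht u w
    have h4 := (dist_cases hs ht v w).2 (by omega)
    exact hv (h4 ▸ hw)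
  · rw [SimpleGraph.dist_comm (u := v) (v := u)] at e
    have h3 := dist_cases hs ht v w
    have h4 := (dist_cases hs ht u w).2 (by omega)
    exact hu (h4 ▸ hw)

/-- Distinct vertices `u`, `v` of `I × J` are told apart by a vertex outside `I × J` that shares one
coordinate with `u` and is next to `u` in the other, on a side not adjacent to `v`. -/
lemma resolving_compl_prod {s t : ℕ} (hs : 5 ≤ s) (ht : 5 ≤ t) {I : Finset (Fin s)}
    {J : Finset (Fin t)} (hI : ∀ a ∈ I, ∀ b ∈ I, ¬ (cycleGraph s).Adj a b)
    (hJ : ∀ a ∈ J, ∀ b ∈ J, ¬ (cycleGraph t).Adj a b) :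
    IsStrongResolvingSet (modularProduct (cycleGraph s)ᶜ (cycleGraph t)ᶜ)
      ((I ×ˢ J : Finset (Fin s × Fin t)) : Set (Fin s × Fin t))ᶜ := by
  intro u v hne
  set X := modularProduct (cycleGraph s)ᶜ (cycleGraph t)ᶜ with hX
  by_cases hu : u ∈ I ×ˢ J
  swap
  · exact ⟨u, by simpa using hu, Or.inr (by simp)⟩
  by_cases hv : v ∈ I ×ˢ J
  swap
  · exact ⟨v, by simpa using hv, Or.inl (by simp)⟩
  rw [Finset.mem_product] at hu hv
  have h1 := hI _ hu.1 _ hv.1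
  have h2 := hJ _ hu.2 _ hv.2
  have huv : X.dist u v = 1 := by
    rw [SimpleGraph.dist_eq_one_iff_adj, hX, adj_modularProduct_compl]
    exact ⟨hne, by simp [h1, h2]⟩
  obtain ⟨w, hwS, hw1, hw2, hw3⟩ : ∃ w, w ∉ I ×ˢ J ∧ u ≠ w ∧ ¬ X.Adj u w ∧ X.Adj v w := by
    simp only [hX, adj_modularProduct_compl, Finset.mem_product]
    by_cases he : u.2 = v.2
    · have he1 : u.1 ≠ v.1 := fun e => hne (Prod.ext e he)
      obtain ⟨z, hz1, hz2, hz3⟩ := cycle_exists_nbr_far hs he1 h1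
      refine ⟨(z, u.2), fun h => hI _ hu.1 _ h.1 hz1, fun e => hz1.ne (congrArg Prod.fst e),
        fun h => ?_, fun e => hz3 (congrArg Prod.fst e), ?_⟩
      · exact (cycleGraph t).irrefl (h.2.1 hz1)
      · simp [hz2, he]
    · obtain ⟨z, hz1, hz2, hz3⟩ := cycle_exists_nbr_far ht he h2
      refine ⟨(u.1, z), fun h => hJ _ hu.2 _ h.2 hz1, fun e => hz1.ne (congrArg Prod.snd e),
        fun h => ?_, fun e => hz3 (congrArg Prod.snd e), ?_⟩
      · exact (cycleGraph s).irrefl (h.2.2 hz1)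
      · simp [hz2, (cycleGraph s).adj_comm v.1, h1]
  refine ⟨w, by simpa using hwS, Or.inl ?_⟩
  rw [huv, dist_eq_two hs ht hw1 hw2, SimpleGraph.dist_eq_one_iff_adj.2 hw3]

lemma clique_card_le' {s t : ℕ} (hs : 5 ≤ s) (ht : 5 ≤ t) (hmax : 6 ≤ max s t)
    (K : Finset (Fin s × Fin t))
    (hK : (modularProduct (cycleGraph s)ᶜ (cycleGraph t)ᶜ).IsClique (K : Set (Fin s × Fin t))) :
    K.card ≤ s / 2 * (t / 2) := by
  have hK' : ∀ u ∈ K, ∀ v ∈ K, u ≠ v →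
      ((cycleGraph s).Adj u.1 v.1 ↔ (cycleGraph t).Adj u.2 v.2) := fun u hu v hv hne =>
    ((adj_modularProduct_compl _ _ u v).1 (hK hu hv hne)).2
  rcases le_max_iff.1 hmax with h | h
  · rw [mul_comm, ← Finset.card_map (Equiv.prodComm (Fin s) (Fin t)).toEmbedding]
    refine clique_card_le ht h _ ?_
    simp only [Finset.mem_map_equiv]
    intro u hu v hv hne
    exact (hK' _ hu _ hv (by simpa using hne)).symm
  · exact clique_card_le hs h K hK'

/-- the strong metric dimension of the modular product of complements
of cycles. -/
theorem sdim_complCycle_modularProduct (s t : ℕ) (hs : 5 ≤ s) (ht : 5 ≤ t)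
    (hmax : 6 ≤ max s t) :
    sdim (modularProduct (cycleGraph s)ᶜ (cycleGraph t)ᶜ) = s * t - (s / 2) * (t / 2) := by
  have hcard : Nat.card (Fin s × Fin t) = s * t := by simp
  have hmem : s * t - (s / 2) * (t / 2) ∈ {n | ∃ S : Set (Fin s × Fin t), S.ncard = n ∧
      IsStrongResolvingSet (modularProduct (cycleGraph s)ᶜ (cycleGraph t)ᶜ) S} := by
    obtain ⟨I, hIc, hI⟩ := cycle_exists_indep hs
    obtain ⟨J, hJc, hJ⟩ := cycle_exists_indep ht
    refine ⟨_, ?_, resolving_compl_prod hs ht hI hJ⟩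
    rw [Set.ncard_compl, hcard, Set.ncard_coe_finset, Finset.card_product, hIc, hJc]
  refine le_antisymm (Nat.sInf_le hmem) (le_csInf ⟨_, hmem⟩ ?_)
  rintro n ⟨S, rfl, hS⟩
  have hc := isClique_compl_of_resolving hs ht hS
  have h1 := clique_card_le' hs ht hmax Sᶜ.toFinite.toFinset (by simpa using hc)
  rw [← Set.ncard_eq_toFinset_card] at h1
  have h2 := Set.ncard_add_ncard_compl S
  omega
end

section
/- For every integer r ≥ 7, the strong metric dimension of the modular product of the path P_5 with the path P_r satisfies dim_s(P_5 ⋄ P_r) = 3r − 2. -/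
/-!
Number the vertices of `P_5` by `0, …, 4` and those of `P_r` by `0, …, r - 1`. Two distinct
vertices of `X = P_5 ⋄ P_r` are adjacent exactly when their first coordinates and their second
coordinates are both close (differ by at most `1`) or both far (`adj_iff`).

For `r ≥ 7` the graph `X` has diameter `3`, and the pairs at distance `3` are exactly
`(0, h), (3, h)` and `(1, h), (4, h)` (`dist_le_two`, `dist_eq_three`): `{0, 3}` and `{1, 4}` are
the `γ`-pairs of `P_5`, so these vertices have no common neighbour. Every other pair that is
neither equal nor adjacent has a common neighbour, because some `m < r` is far from two given
second coordinates.

Lower bound: the two vertices of a pair at distance `3` can only be strongly resolved by one of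
themselves, as the diameter is `3`; the same holds for `(2, h), (2, l)` with `h, l` far, as these
are at distance `2` and `(2, h)` has eccentricity `2`. So the complement of a strong resolving set
contains at most `r` vertices in rows `0, 3`, at most `r` in rows `1, 4` and at most two in row `2`,
leaving at least `5 r - (2 r + 2)` vertices in the set.

Upper bound: rows `3` and `4` together with row `2` minus `(2, 0), (2, 1)` strongly resolve `X`.
A pair containing `(g, h)` with `g ∈ {0, 1}`, whose other vertex lies in rows `g, …, 2`, is resolved
by `(g + 3, h)`: it is at distance `3` from `(g, h)`, and the other vertex is on a geodesic.
The pair `(2, 0), (2, 1)` is resolved by `(3, 2)`.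
-/

open SimpleGraph

namespace PathFive

/-- Adjacency of `(g, h)` and `(k, l)` in the modular product of two paths, in terms of the numbers
of the vertices. -/
def NatAdj (g h k l : ℕ) : Prop :=
  ¬ (g = k ∧ h = l) ∧
    (((g ≤ k + 1 ∧ k ≤ g + 1) ∧ (h ≤ l + 1 ∧ l ≤ h + 1)) ∨
     (¬ (g ≤ k + 1 ∧ k ≤ g + 1) ∧ ¬ (h ≤ l + 1 ∧ l ≤ h + 1)))

/-- The graph `P_5 ⋄ P_r`. -/
abbrev X (r : ℕ) : SimpleGraph (Fin 5 × Fin r) :=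
  modularProduct (pathGraph 5) (pathGraph r)

theorem adj_iff {r : ℕ} (a b : Fin 5 × Fin r) :
    (X r).Adj a b ↔ NatAdj a.1 a.2 b.1 b.2 := by
  obtain ⟨g, h⟩ := a
  obtain ⟨k, l⟩ := b
  simp only [X, modularProduct, fromRel_adj, pathGraph_adj, NatAdj, ne_eq, Prod.mk.injEq,
    Fin.ext_iff]
  omega

theorem natAdj_symm {g h k l : ℕ} (H : NatAdj g h k l) : NatAdj k l g h := by
  unfold NatAdj at *; omega

/-- Two second coordinates exclude at most six of the `r ≥ 7` vertices; one of `0, 3, 6` is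
always left, since every vertex is close to at most one of them. -/
theorem exists_far {r h l : ℕ} (hr : 7 ≤ r) :
    ∃ m < r, ¬ (h ≤ m + 1 ∧ m ≤ h + 1) ∧ ¬ (l ≤ m + 1 ∧ m ≤ l + 1) := by
  by_cases h0 : 2 ≤ h ∧ 2 ≤ l
  · exact ⟨0, by omega, by omega, by omega⟩
  by_cases h3 : (h ≤ 1 ∨ 5 ≤ h) ∧ (l ≤ 1 ∨ 5 ≤ l)
  · exact ⟨3, by omega, by omega, by omega⟩
  · exact ⟨6, by omega, by omega, by omega⟩

theorem exists_common {r g h k l : ℕ} (hr : 7 ≤ r) (hg : g < 5) (hk : k < 5) (hh : h < r)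
    (hl : l < r) (hne : ¬ (g = k ∧ h = l)) (hadj : ¬ NatAdj g h k l)
    (h3 : ¬ (h = l ∧ (g = k + 3 ∨ k = g + 3))) :
    ∃ c < 5, ∃ m < r, NatAdj g h c m ∧ NatAdj c m k l := by
  wlog hgk : g ≤ k generalizing g h k l
  · obtain ⟨c, hc, m, hm, h1, h2⟩ := this hk hg hl hh (by omega)
      (fun H => hadj (natAdj_symm H)) (by omega) (by omega)
    exact ⟨c, hc, m, hm, natAdj_symm h2, natAdj_symm h1⟩
  obtain ⟨m, hm, hhm, hlm⟩ := exists_far (h := h) (l := l) hr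
  unfold NatAdj at *
  obtain h01 | h2 | h3' | h4 : k ≤ g + 1 ∨ k = g + 2 ∨ k = g + 3 ∨ k = g + 4 := by omega
  · by_cases hg2 : 2 ≤ g
    · exact ⟨0, by omega, m, hm, by omega, by omega⟩
    · exact ⟨4, by omega, m, hm, by omega, by omega⟩
  · exact ⟨g + 1, by omega, h, hh, by omega, by omega⟩
  · -- Here `h` and `l` are consecutive. A second coordinate close to one and far from the other
    -- exists on at least one side.
    by_cases hlt : h < l
    · by_cases hlr : l + 1 < r
      · exact ⟨g + 2, by omega, l + 1, by omega, by omega, by omega⟩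
      · exact ⟨g + 1, by omega, h - 1, by omega, by omega, by omega⟩
    · by_cases hlr : h + 1 < r
      · exact ⟨g + 1, by omega, h + 1, by omega, by omega, by omega⟩
      · exact ⟨g + 2, by omega, l - 1, by omega, by omega, by omega⟩
  · exact ⟨2, by omega, m, hm, by omega, by omega⟩

/-! ### Distances -/

section Distances

variable {r : ℕ}

/-- The two vertices have equal second coordinates, and first coordinates that differ by `3`. For
`r ≥ 7` these are exactly the pairs at distance `3`. -/
def Opp (a b : Fin 5 × Fin r) : Prop :=
  a.2 = b.2 ∧ ((a.1 : ℕ) = b.1 + 3 ∨ (b.1 : ℕ) = a.1 + 3)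

theorem dist_eq_one {a b : Fin 5 × Fin r} (h : NatAdj a.1 a.2 b.1 b.2) : (X r).dist a b = 1 :=
  dist_eq_one_iff_adj.2 ((adj_iff a b).2 h)

/-- The length of the walk is recorded together with its existence, as `dist` is `0` on vertices
that are not reachable from one another. -/
theorem exists_walk_le_two (hr : 7 ≤ r) {a b : Fin 5 × Fin r} (h3 : ¬ Opp a b) :
    ∃ p : (X r).Walk a b, p.length ≤ 2 := by
  by_cases hab : a = b
  · subst hab; exact ⟨Walk.nil, by simp⟩
  by_cases hadj : NatAdj a.1 a.2 b.1 b.2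
  · exact ⟨Walk.cons ((adj_iff _ _).2 hadj) Walk.nil, by simp⟩
  obtain ⟨c, hc, m, hm, h1, h2⟩ := exists_common hr a.1.2 b.1.2 a.2.2 b.2.2
    (fun H => hab (Prod.ext (Fin.ext H.1) (Fin.ext H.2))) hadj
    (fun H => h3 ⟨Fin.ext H.1, H.2⟩)
  exact ⟨Walk.cons ((adj_iff a (⟨c, hc⟩, ⟨m, hm⟩)).2 h1)
    (Walk.cons ((adj_iff (⟨c, hc⟩, ⟨m, hm⟩) b).2 h2) Walk.nil), by simp⟩

theorem dist_le_two (hr : 7 ≤ r) {a b : Fin 5 × Fin r} (h3 : ¬ Opp a b) : (X r).dist a b ≤ 2 := by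
  obtain ⟨p, hp⟩ := exists_walk_le_two hr h3
  exact (dist_le p).trans hp

theorem connected (hr : 7 ≤ r) : (X r).Connected := by
  have : Nonempty (Fin 5 × Fin r) := ⟨(0, ⟨0, by omega⟩)⟩
  refine ⟨fun a b => ?_⟩
  by_cases h3 : Opp a b
  · -- Row `2` contains no vertex of a pair at distance `3`.
    have hc : ∀ d : Fin 5 × Fin r, ¬ Opp d (2, a.2) := by
      rintro ⟨d, e⟩ ⟨-, h⟩
      have := d.2
      simp at h
      omega
    obtain ⟨p, -⟩ := exists_walk_le_two hr (hc a)
    obtain ⟨q, -⟩ := exists_walk_le_two hr (hc b)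
    exact ⟨p.append q.reverse⟩
  · exact ⟨(exists_walk_le_two hr h3).choose⟩

theorem dist_eq_two (hr : 7 ≤ r) {a b : Fin 5 × Fin r} (hne : ¬ ((a.1 : ℕ) = b.1 ∧ (a.2 : ℕ) = b.2))
    (hadj : ¬ NatAdj a.1 a.2 b.1 b.2) (h3 : ¬ Opp a b) : (X r).dist a b = 2 := by
  have h2 := dist_le_two hr h3
  have h1 : (X r).dist a b ≠ 1 := fun H => hadj ((adj_iff a b).1 (dist_eq_one_iff_adj.1 H))
  have h0 : (X r).dist a b ≠ 0 := fun H => by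
    have := (connected hr).dist_eq_zero_iff.1 H
    exact hne ⟨by rw [this], by rw [this]⟩
  omega

theorem dist_eq_three (hr : 7 ≤ r) {a b : Fin 5 × Fin r} (h3 : Opp a b) : (X r).dist a b = 3 := by
  obtain ⟨g, h⟩ := a
  obtain ⟨k, l⟩ := b
  obtain ⟨h1, h2⟩ := h3
  dsimp only at h1 h2
  subst h1
  have hg := g.2
  have hk := k.2
  apply le_antisymm
  · -- The step from `(g, h)` to the next row towards `(k, h)` leaves a pair at distance `2`.
    obtain ⟨c, hc, hcg, hck⟩ : ∃ c < 5, (c ≤ (g : ℕ) + 1 ∧ (g : ℕ) ≤ c + 1 ∧ c ≠ g) ∧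
        ¬ (c = (k : ℕ) + 3 ∨ (k : ℕ) = c + 3) := by
      rcases h2 with h2 | h2
      · exact ⟨g - 1, by omega, by omega, by omega⟩
      · exact ⟨g + 1, by omega, by omega, by omega⟩
    have e1 : (X r).dist (g, h) (⟨c, hc⟩, h) = 1 := dist_eq_one (by simp only [NatAdj]; omega)
    have e2 : (X r).dist (⟨c, hc⟩, h) (k, h) ≤ 2 := dist_le_two hr (fun H => hck H.2)
    have := (connected hr).dist_triangle (u := (g, h)) (v := (⟨c, hc⟩, h)) (w := (k, h))
    omega
  · obtain ⟨p, hp⟩ := ((connected hr) (g, h) (k, h)).exists_walk_length_eq_dist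
    rw [← hp]
    match p with
    | .nil => omega
    | .cons e .nil =>
      have := (adj_iff _ _).1 e
      simp only [NatAdj] at this
      omega
    | .cons (v := v) e (.cons e' .nil) =>
      have h1 := (adj_iff _ _).1 e
      have h2 := (adj_iff _ _).1 e'
      have := v.1.2
      simp only [NatAdj] at h1 h2
      omega
    | .cons _ (.cons _ (.cons _ q)) => simp only [Walk.length_cons]; omega

theorem dist_le_three (hr : 7 ≤ r) (a b : Fin 5 × Fin r) : (X r).dist a b ≤ 3 := by
  by_cases h : Opp a b
  · exact (dist_eq_three hr h).le
  · exact (dist_le_two hr h).trans (by norm_num)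

/-! ### Lower bound -/

theorem mem_of_opp (hr : 7 ≤ r) {S : Set (Fin 5 × Fin r)} (hS : IsStrongResolvingSet (X r) S)
    {a b : Fin 5 × Fin r} (h : Opp a b) : a ∈ S ∨ b ∈ S := by
  have hd := dist_eq_three hr h
  have hne : a ≠ b := by
    rintro rfl
    rw [SimpleGraph.dist_self] at hd
    omega
  obtain ⟨w, hw, hw'⟩ := hS a b hne
  have h1 := dist_le_three hr a w
  have h2 := dist_le_three hr b w
  have hd' : (X r).dist b a = 3 := by rw [dist_comm]; exact hd
  rcases hw' with h' | h'
  · right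
    have : b = w := (connected hr).dist_eq_zero_iff.1 (by omega)
    rwa [this]
  · left
    have : a = w := (connected hr).dist_eq_zero_iff.1 (by omega)
    rwa [this]

theorem mem_of_row_two (hr : 7 ≤ r) {S : Set (Fin 5 × Fin r)} (hS : IsStrongResolvingSet (X r) S)
    {a b : Fin 5 × Fin r} (ha : (a.1 : ℕ) = 2) (hb : (b.1 : ℕ) = 2)
    (h : ¬ ((a.2 : ℕ) ≤ b.2 + 1 ∧ (b.2 : ℕ) ≤ a.2 + 1)) : a ∈ S ∨ b ∈ S := by
  have ho : ∀ c d : Fin 5 × Fin r, (c.1 : ℕ) = 2 → ¬ Opp c d := by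
    rintro c d hc ⟨-, H⟩
    have := d.1.2
    omega
  have hd : (X r).dist a b = 2 :=
    dist_eq_two hr (by omega) (by unfold NatAdj; omega) (ho a b ha)
  have hne : a ≠ b := by
    rintro rfl
    omega
  obtain ⟨w, hw, hw'⟩ := hS a b hne
  have h1 := dist_le_two hr (ho a w ha)
  have h2 := dist_le_two hr (ho b w hb)
  have hd' : (X r).dist b a = 2 := by rw [dist_comm]; exact hd
  rcases hw' with h' | h'
  · right
    have : b = w := (connected hr).dist_eq_zero_iff.1 (by omega)
    rwa [this]
  · left
    have : a = w := (connected hr).dist_eq_zero_iff.1 (by omega)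
    rwa [this]

theorem lower_bound (hr : 7 ≤ r) {S : Set (Fin 5 × Fin r)} (hS : IsStrongResolvingSet (X r) S) :
    3 * r - 2 ≤ S.ncard := by
  classical
  -- Rows `g` and `g + 3` miss at most one vertex of `S` in each column.
  have hrows : ∀ g : ℕ,
      (Finset.univ.filter fun a : Fin 5 × Fin r =>
        a ∉ S ∧ ((a.1 : ℕ) = g ∨ (a.1 : ℕ) = g + 3)).card ≤ r := by
    intro g
    refine (Finset.card_le_card_of_injOn (t := (Finset.univ : Finset (Fin r))) Prod.snd
      (fun _ _ => Finset.mem_coe.2 (Finset.mem_univ _)) ?_).trans (by simp)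
    intro a ha b hb hab
    simp only [Finset.coe_filter, Finset.mem_univ, true_and, Set.mem_ofPred_eq] at ha hb
    by_cases he : (a.1 : ℕ) = b.1
    · exact Prod.ext (Fin.ext he) hab
    · rcases mem_of_opp hr hS (a := a) (b := b) ⟨hab, by omega⟩ with h | h
      · exact absurd h ha.1
      · exact absurd h hb.1
  have htwo : (Finset.univ.filter fun a : Fin 5 × Fin r =>
      a ∉ S ∧ (a.1 : ℕ) = 2).card ≤ 2 := by
    by_contra! hcon
    obtain ⟨a, b, c, ha, hb, hc, hab, hac, hbc⟩ := Finset.two_lt_card_iff.1 hcon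
    simp only [Finset.mem_filter, Finset.mem_univ, true_and] at ha hb hc
    have key : ∀ x y : Fin 5 × Fin r, x ≠ y → (x ∉ S ∧ (x.1 : ℕ) = 2) →
        (y ∉ S ∧ (y.1 : ℕ) = 2) →
        (x.2 : ℕ) ≠ y.2 ∧ (x.2 : ℕ) ≤ y.2 + 1 ∧ (y.2 : ℕ) ≤ x.2 + 1 := by
      intro x y hxy hx hy
      refine ⟨fun H => hxy (Prod.ext (Fin.ext (hx.2.trans hy.2.symm)) (Fin.ext H)), ?_⟩
      by_contra hfar
      rcases mem_of_row_two hr hS hx.2 hy.2 hfar with h | h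
      · exact hx.1 h
      · exact hy.1 h
    have := key a b hab ha hb
    have := key a c hac ha hc
    have := key b c hbc hb hc
    omega
  have hsub : Finset.univ.filter (fun a : Fin 5 × Fin r => a ∉ S) ⊆
      (Finset.univ.filter fun a : Fin 5 × Fin r =>
        a ∉ S ∧ ((a.1 : ℕ) = 0 ∨ (a.1 : ℕ) = 0 + 3)) ∪
      (Finset.univ.filter fun a : Fin 5 × Fin r =>
        a ∉ S ∧ ((a.1 : ℕ) = 1 ∨ (a.1 : ℕ) = 1 + 3)) ∪
      (Finset.univ.filter fun a : Fin 5 × Fin r => a ∉ S ∧ (a.1 : ℕ) = 2) := by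
    intro a ha
    have := a.1.2
    simp only [Finset.mem_filter, Finset.mem_univ, true_and, Finset.mem_union] at ha ⊢
    have h5 : ((a.1 : ℕ) = 0 ∨ (a.1 : ℕ) = 0 + 3) ∨ ((a.1 : ℕ) = 1 ∨ (a.1 : ℕ) = 1 + 3) ∨
        (a.1 : ℕ) = 2 := by omega
    tauto
  have hcard := (Finset.card_le_card hsub).trans (Finset.card_union_le _ _)
  have hcard' := Finset.card_union_le
    (Finset.univ.filter fun a : Fin 5 × Fin r =>
        a ∉ S ∧ ((a.1 : ℕ) = 0 ∨ (a.1 : ℕ) = 0 + 3))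
    (Finset.univ.filter fun a : Fin 5 × Fin r =>
        a ∉ S ∧ ((a.1 : ℕ) = 1 ∨ (a.1 : ℕ) = 1 + 3))
  have h0 := hrows 0
  have h1 := hrows 1
  have htot := Finset.card_filter_add_card_filter_not
    (s := (Finset.univ : Finset (Fin 5 × Fin r))) (fun a => a ∈ S)
  simp only [Finset.card_univ, Fintype.card_prod, Fintype.card_fin] at htot
  have hn : S.ncard = (Finset.univ.filter fun a : Fin 5 × Fin r => a ∈ S).card := by
    rw [← Set.ncard_coe_finset]
    simp
  omega

/-! ### Upper bound -/

/-- Rows `3` and `4`, and row `2` without its first two vertices. -/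
def resolving (hr : 7 ≤ r) : Finset (Fin 5 × Fin r) :=
  ({3, 4} : Finset (Fin 5)) ×ˢ Finset.univ ∪
    ({2} : Finset (Fin 5)) ×ˢ Finset.Ici (⟨2, by omega⟩ : Fin r)

theorem card_resolving (hr : 7 ≤ r) : (resolving hr).card = 3 * r - 2 := by
  unfold resolving
  rw [Finset.card_union_of_disjoint]
  · simp [Finset.card_product]
    omega
  · rw [Finset.disjoint_left]
    rintro ⟨g, h⟩ h1 h2
    simp only [Finset.mem_product, Finset.mem_insert, Finset.mem_singleton] at h1 h2
    rcases h1.1 with h | h <;> simp [h] at h2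

theorem mem_resolving (hr : 7 ≤ r) (a : Fin 5 × Fin r) :
    a ∈ resolving hr ↔ 3 ≤ (a.1 : ℕ) ∨ ((a.1 : ℕ) = 2 ∧ 2 ≤ (a.2 : ℕ)) := by
  obtain ⟨g, h⟩ := a
  simp only [resolving, Finset.mem_union, Finset.mem_product, Finset.mem_insert,
    Finset.mem_singleton, Finset.mem_univ, Finset.mem_Ici, Fin.ext_iff, Fin.le_def, and_true]
  have := g.2
  have e3 : ((3 : Fin 5) : ℕ) = 3 := rfl
  have e4 : ((4 : Fin 5) : ℕ) = 4 := rfl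
  have e2 : ((2 : Fin 5) : ℕ) = 2 := rfl
  omega

/-- For `g ≤ 1`, every vertex in rows `g, …, 2` other than `(g, h)` is on a geodesic from `(g, h)`
to `(g + 3, h)`: it is adjacent to exactly one of the two. -/
theorem resolve_of_row_le_one (hr : 7 ≤ r) {u v : Fin 5 × Fin r} (huv : u ≠ v) (hu : (u.1 : ℕ) ≤ 1)
    (h1 : (u.1 : ℕ) ≤ v.1) (h2 : (v.1 : ℕ) ≤ 2) :
    ∃ w ∈ (resolving hr : Set (Fin 5 × Fin r)),
      (X r).dist u w = (X r).dist u v + (X r).dist v w := by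
  have hw : (u.1 : ℕ) + 3 < 5 := by omega
  have hne : ¬ ((u.1 : ℕ) = v.1 ∧ (u.2 : ℕ) = v.2) :=
    fun H => huv (Prod.ext (Fin.ext H.1) (Fin.ext H.2))
  refine ⟨(⟨u.1 + 3, hw⟩, u.2), ?_, ?_⟩
  · rw [Finset.mem_coe, mem_resolving]
    left
    dsimp only
    omega
  rw [dist_eq_three hr (a := u) (b := (⟨u.1 + 3, hw⟩, u.2)) ⟨rfl, Or.inr rfl⟩]
  have o1 : ¬ Opp u v := fun H => by have := H.2; omega
  have o2 : ¬ Opp v (⟨u.1 + 3, hw⟩, u.2) := by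
    rintro ⟨e, H⟩
    have := congrArg Fin.val e
    dsimp only at H this
    omega
  by_cases hadj : NatAdj u.1 u.2 v.1 v.2
  · rw [dist_eq_one hadj, dist_eq_two hr _ _ o2]
    · dsimp only; omega
    · unfold NatAdj at *; dsimp only; omega
  · rw [dist_eq_two hr hne hadj o1, dist_eq_one]
    unfold NatAdj at *; dsimp only; omega

theorem isStrongResolvingSet_resolving (hr : 7 ≤ r) :
    IsStrongResolvingSet (X r) (resolving hr : Set (Fin 5 × Fin r)) := by
  intro u v huv
  by_cases hu : u ∈ resolving hr
  · exact ⟨u, hu, Or.inr (by simp)⟩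
  by_cases hv : v ∈ resolving hr
  · exact ⟨v, hv, Or.inl (by simp)⟩
  rw [mem_resolving] at hu hv
  by_cases h1 : (u.1 : ℕ) ≤ 1 ∧ (u.1 : ℕ) ≤ v.1
  · obtain ⟨w, hw, h⟩ := resolve_of_row_le_one hr huv h1.1 h1.2 (by omega)
    exact ⟨w, hw, Or.inl h⟩
  by_cases h2 : (v.1 : ℕ) ≤ 1 ∧ (v.1 : ℕ) ≤ u.1
  · obtain ⟨w, hw, h⟩ := resolve_of_row_le_one hr huv.symm h2.1 h2.2 (by omega)
    exact ⟨w, hw, Or.inr h⟩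
  have hne : ¬ ((u.1 : ℕ) = v.1 ∧ (u.2 : ℕ) = v.2) :=
    fun H => huv (Prod.ext (Fin.ext H.1) (Fin.ext H.2))
  -- What remains is the pair `(2, 0), (2, 1)`, in either order.
  let w : Fin 5 × Fin r := (3, ⟨2, by omega⟩)
  have w1 : (w.1 : ℕ) = 3 := rfl
  have w2 : (w.2 : ℕ) = 2 := rfl
  refine ⟨w, by rw [Finset.mem_coe, mem_resolving]; omega, ?_⟩
  have key : ∀ a b : Fin 5 × Fin r, (a.1 : ℕ) = 2 → (b.1 : ℕ) = 2 → (a.2 : ℕ) = 0 →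
      (b.2 : ℕ) = 1 → (X r).dist a w = (X r).dist a b + (X r).dist b w := by
    intro a b a1 b1 a2 b2
    rw [dist_eq_two hr (a := a) (b := w) (by omega) (by unfold NatAdj; omega)
      (fun H => by have := H.2; omega),
      dist_eq_one (a := a) (b := b) (by unfold NatAdj; omega),
      dist_eq_one (a := b) (b := w) (by unfold NatAdj; omega)]
  by_cases hu0 : (u.2 : ℕ) = 0
  · exact Or.inl (key u v (by omega) (by omega) hu0 (by omega))
  · exact Or.inr (key v u (by omega) (by omega) (by omega) (by omega))

end Distances

end PathFive

/-- the strong metric dimension of `P_5 ⋄ P_r` for `r ≥ 7`. -/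
theorem sdim_path5_modularProduct_path (r : ℕ) (hr : 7 ≤ r) :
    sdim (modularProduct (pathGraph 5) (pathGraph r)) = 3 * r - 2 := by
  have hmem : 3 * r - 2 ∈ {n | ∃ S : Set (Fin 5 × Fin r), S.ncard = n ∧
      IsStrongResolvingSet (modularProduct (pathGraph 5) (pathGraph r)) S} :=
    ⟨_, (Set.ncard_coe_finset _).trans (PathFive.card_resolving hr),
      PathFive.isStrongResolvingSet_resolving hr⟩
  refine le_antisymm (Nat.sInf_le hmem) (le_csInf ⟨_, hmem⟩ ?_)
  rintro n ⟨S, rfl, hS⟩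
  exact PathFive.lower_bound hr hS
end
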